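/- Let F be a real inner product space, let E = F × ℝ with the product inner product ⟨(h,v),(h',v')⟩ = ⟨h,h'⟩ + v·v', and let μ > 0. Given x̂ = (ĥ, v̂) ∈ E, define x̄ = (ĥ, max(v̂, 0)), and define x* = 0 if μ·‖x̄‖ ≤ 1, and x* = (1 − 1/(μ‖x̄‖))·x̄ otherwise (i.e., x* = (1 − 1/(μ‖x̄‖))⁺ · x̄). Then x* lies in the constraint set C = {(h,v) ∈ E : v ≥ 0} and minimizes the function F(x) = (μ/2)·‖x − x̂‖² + ‖x‖ over C: for all x ∈ C, F(x*) ≤ F(x). -/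

import Mathlib

/-!
Let `x̄` be the projection of `x̂` onto the cone `v ≥ 0`, and `x*` the shrinkage of `x̄`.
Then `μ(x̂ - x*) = μ(x̄ - x*) + μ(x̂ - x̄)`. The first summand has norm at most `1` and pairs
with `x*` to `‖x*‖`, so it is a subgradient of the norm at `x*`; the second is normal to the
cone at `x*`, because `x*` is a multiple of `x̄` and `x̂ - x̄` is orthogonal to `x̄`. This is the
first-order optimality condition, which suffices for minimality because the objective is convex.
-/

open scoped RealInnerProductSpace

section FirstOrderOptimality

variable {E : Type*} [SeminormedAddCommGroup E] [InnerProductSpace ℝ E]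

theorem isMinOn_sq_norm_sub_add_of_subgradient {μ : ℝ} (hμ : 0 ≤ μ) {f : E → ℝ} {C : Set E}
    {a s : E} (hs : ∀ x ∈ C, f s + ⟪μ • (a - s), x - s⟫ ≤ f x) :
    IsMinOn (fun x => μ / 2 * ‖x - a‖ ^ 2 + f x) C s := by
  rw [isMinOn_iff]
  intro x hx
  have expand : ‖x - a‖ ^ 2 = ‖a - s‖ ^ 2 - 2 * ⟪a - s, x - s⟫ + ‖x - s‖ ^ 2 := by
    rw [← norm_sub_sq_real, sub_sub_sub_cancel_right, norm_sub_rev]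
  have subgradient := hs x hx
  rw [real_inner_smul_left] at subgradient
  have : 0 ≤ μ / 2 * ‖x - s‖ ^ 2 := by positivity
  rw [expand, norm_sub_rev s a]
  linarith

theorem norm_add_inner_sub_le_norm {p s : E} (hp : ‖p‖ ≤ 1) (hps : ⟪p, s⟫ = ‖s‖) (x : E) :
    ‖s‖ + ⟪p, x - s⟫ ≤ ‖x‖ :=
  calc
    ‖s‖ + ⟪p, x - s⟫ = ⟪p, x⟫ := by rw [inner_sub_right, hps, add_sub_cancel]
    _ ≤ ‖p‖ * ‖x‖ := real_inner_le_norm p x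
    _ ≤ ‖x‖ := mul_le_of_le_one_left (norm_nonneg x) hp

end FirstOrderOptimality

section Shrinkage

variable {E : Type*} [SeminormedAddCommGroup E]

/-- The shrinkage (block soft-thresholding) operator with threshold `1 / μ`, which is the proximal
map of `‖·‖ / μ`. The convention `1 / 0 = 0` gives the intended value `shrinkage μ 0 = 0`. -/
noncomputable def shrinkage [NormedSpace ℝ E] (μ : ℝ) (b : E) : E :=
  (1 - 1 / (μ * ‖b‖))⁺ • b

theorem norm_smul_sub_shrinkage_le_one [NormedSpace ℝ E] {μ : ℝ} (hμ : 0 ≤ μ) (b : E) :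
    ‖μ • (b - shrinkage μ b)‖ ≤ 1 := by
  set c := (1 - 1 / (μ * ‖b‖))⁺ with hc
  have c_le_one : c ≤ 1 := max_le (sub_le_self 1 (by positivity)) zero_le_one
  have le_c : 1 - 1 / (μ * ‖b‖) ≤ c := le_posPart _
  have residual : μ • (b - shrinkage μ b) = (μ * (1 - c)) • b := by
    rw [shrinkage, ← hc, mul_smul, sub_smul, one_smul]
  calc
    ‖μ • (b - shrinkage μ b)‖ = (1 - c) * (μ * ‖b‖) := by
      rw [residual, norm_smul, Real.norm_of_nonneg (mul_nonneg hμ (sub_nonneg.2 c_le_one))]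
      ring
    _ ≤ 1 / (μ * ‖b‖) * (μ * ‖b‖) := by gcongr; linarith
    _ ≤ 1 := by rw [one_div_mul_eq_div]; exact div_self_le_one _

theorem inner_smul_sub_shrinkage_self [InnerProductSpace ℝ E] {μ : ℝ} (hμ : μ ≠ 0) (b : E) :
    ⟪μ • (b - shrinkage μ b), shrinkage μ b⟫ = ‖shrinkage μ b‖ := by
  set c := (1 - 1 / (μ * ‖b‖))⁺ with hc
  have complementarity : μ * (1 - c) * c * ‖b‖ ^ 2 = c * ‖b‖ := by
    rcases eq_or_ne ‖b‖ 0 with hb | hb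
    · simp only [hb, ne_eq, OfNat.ofNat_ne_zero, not_false_eq_true, zero_pow, mul_zero]
    · rcases le_total (1 - 1 / (μ * ‖b‖)) 0 with h | h
      · rw [hc, posPart_of_nonpos h]
        ring
      · rw [hc, posPart_of_nonneg h]
        field_simp
        ring
  calc
    ⟪μ • (b - shrinkage μ b), shrinkage μ b⟫ = μ * (1 - c) * c * ‖b‖ ^ 2 := by
      rw [shrinkage, ← hc, real_inner_smul_left, inner_sub_left, real_inner_smul_left,
        real_inner_smul_right, real_inner_self_eq_norm_sq]
      ring
    _ = ‖shrinkage μ b‖ := by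
      rw [complementarity, shrinkage, norm_smul, Real.norm_of_nonneg (posPart_nonneg _)]

theorem isMinOn_shrinkage [InnerProductSpace ℝ E] {μ : ℝ} (hμ : 0 < μ) {C : Set E} {a b : E}
    (orthogonal : ⟪a - b, b⟫ = 0) (polar : ∀ x ∈ C, ⟪a - b, x⟫ ≤ 0) :
    IsMinOn (fun x => μ / 2 * ‖x - a‖ ^ 2 + ‖x‖) C (shrinkage μ b) := by
  refine isMinOn_sq_norm_sub_add_of_subgradient hμ.le fun x hx => ?_
  have subgradient : ‖shrinkage μ b‖ + ⟪μ • (b - shrinkage μ b), x - shrinkage μ b⟫ ≤ ‖x‖ :=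
    norm_add_inner_sub_le_norm (norm_smul_sub_shrinkage_le_one hμ.le b)
      (inner_smul_sub_shrinkage_self hμ.ne' b) x
  have normal : ⟪μ • (a - b), x - shrinkage μ b⟫ ≤ 0 := by
    rw [real_inner_smul_left, inner_sub_right, shrinkage, real_inner_smul_right, orthogonal,
      mul_zero, sub_zero]
    exact mul_nonpos_of_nonneg_of_nonpos hμ.le (polar x hx)
  rw [← sub_add_sub_cancel a b (shrinkage μ b), smul_add, inner_add_left]
  linarith

end Shrinkage

theorem shrinkage_eq_ite {E : Type*} [NormedAddCommGroup E] [NormedSpace ℝ E] {μ : ℝ}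
    (hμ : 0 < μ) (b : E) :
    shrinkage μ b = if μ * ‖b‖ ≤ 1 then 0 else (1 - 1 / (μ * ‖b‖)) • b := by
  rcases eq_or_ne b 0 with rfl | hb
  · simp only [shrinkage, smul_zero, ite_self]
  have hμb : 0 < μ * ‖b‖ := mul_pos hμ (norm_pos_iff.2 hb)
  split_ifs with h
  · rw [shrinkage, posPart_of_nonpos (sub_nonpos.2 ((one_le_div hμb).2 h)), zero_smul]
  · rw [shrinkage, posPart_of_nonneg (sub_nonneg.2 ((div_le_one hμb).2 (le_of_not_ge h)))]

section VerticalPosPart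

variable {F : Type*}

/-- The projection of `F × ℝ` onto the half-space of nonnegative second coordinates: it keeps the
horizontal part in `F` and replaces the vertical part by its positive part. -/
def verticalPosPart (x : WithLp 2 (F × ℝ)) : WithLp 2 (F × ℝ) :=
  WithLp.toLp 2 (x.fst, x.snd⁺)

theorem inner_sub_verticalPosPart [NormedAddCommGroup F] [InnerProductSpace ℝ F]
    (a x : WithLp 2 (F × ℝ)) :
    ⟪a - verticalPosPart a, x⟫ = -(a.snd⁻ * x.snd) := by
  have vertical : a.snd - a.snd⁺ = -a.snd⁻ := by
    linarith [posPart_sub_negPart a.snd]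
  change ⟪a.fst - a.fst, x.fst⟫ + ⟪a.snd - a.snd⁺, x.snd⟫ = _
  rw [sub_self, inner_zero_left, zero_add, vertical, Real.inner_apply, neg_mul]

theorem snd_shrinkage_verticalPosPart_nonneg [SeminormedAddCommGroup F] [NormedSpace ℝ F]
    (μ : ℝ) (a : WithLp 2 (F × ℝ)) :
    0 ≤ (shrinkage μ (verticalPosPart a)).snd :=
  mul_nonneg (posPart_nonneg _) (posPart_nonneg a.snd)

theorem isMinOn_shrinkage_verticalPosPart [NormedAddCommGroup F] [InnerProductSpace ℝ F]
    {μ : ℝ} (hμ : 0 < μ) (a : WithLp 2 (F × ℝ)) :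
    IsMinOn (fun x => μ / 2 * ‖x - a‖ ^ 2 + ‖x‖) {x | 0 ≤ x.snd}
      (shrinkage μ (verticalPosPart a)) := by
  refine isMinOn_shrinkage hμ ?orthogonal fun x hx => ?polar
  case orthogonal =>
    rw [inner_sub_verticalPosPart, neg_eq_zero, mul_eq_zero, negPart_eq_zero]
    exact (le_total 0 a.snd).imp_right posPart_of_nonpos
  case polar =>
    rw [inner_sub_verticalPosPart, neg_nonpos]
    exact mul_nonneg (negPart_nonneg _) hx

end VerticalPosPart

/-- The constrained shrinkage operator used in the local ADMM step: on
`E = F ×₂ ℝ` (product inner product space), given `x̂ = (ĥ, v̂)`, setting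
`x̄ = (ĥ, v̂⁺)` and `x* = (1 - 1/(μ‖x̄‖))⁺ • x̄`, the point `x*` is feasible for
`v ≥ 0` and minimizes `(μ/2)‖x - x̂‖² + ‖x‖` over that constraint set. -/
theorem constrained_shrinkage_is_minimizer
    {F : Type*} [NormedAddCommGroup F] [InnerProductSpace ℝ F]
    (μ : ℝ) (hμ : 0 < μ) (xhat xbar xstar : WithLp 2 (F × ℝ))
    (hxbar : xbar = (WithLp.equiv 2 (F × ℝ)).symm
      ((WithLp.equiv 2 (F × ℝ) xhat).1, max (WithLp.equiv 2 (F × ℝ) xhat).2 0))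
    (hxstar : xstar =
      if μ * ‖xbar‖ ≤ 1 then 0 else (1 - 1 / (μ * ‖xbar‖)) • xbar) :
    0 ≤ (WithLp.equiv 2 (F × ℝ) xstar).2 ∧
    ∀ x : WithLp 2 (F × ℝ), 0 ≤ (WithLp.equiv 2 (F × ℝ) x).2 →
      μ / 2 * ‖xstar - xhat‖ ^ 2 + ‖xstar‖ ≤ μ / 2 * ‖x - xhat‖ ^ 2 + ‖x‖ := by
  have xstar_eq : xstar = shrinkage μ (verticalPosPart xhat) := by
    rw [hxstar, ← shrinkage_eq_ite hμ, hxbar]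
    rfl
  rw [xstar_eq]
  exact ⟨snd_shrinkage_verticalPosPart_nonneg μ xhat,
    isMinOn_iff.1 (isMinOn_shrinkage_verticalPosPart hμ xhat)⟩
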